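/- There exist absolute constants c₁, c₂ > 0 such that for every positive integer N (h = 1/N) and every vector (φ₀,…,φ_{N−1}) ∈ ℂ^N, setting φ_h = Σ_{j=0}^{N−1} φ_j χ_j, φ̄ = h Σ_{j=0}^{N−1} φ_j (the mean value of φ_h), and M(φ_h) = sup { | Σ_{j=0}^{N−1} (φ_j − φ_{j−1}) u(s_j) + φ̄ · h Σ_{j=0}^{N−1} u(s_j) | : u C^∞ and 1-periodic with ‖u‖₁ ≤ 1 } (indices understood modulo N; M(φ_h) is the H^{−1} norm of the distribution φ_h′ + φ̂_h(0) d_h, where d_h = h Σ_j δ_{s_j}), one has c₁ M(φ_h) ≤ ‖φ_h‖₀ ≤ c₂ M(φ_h). -/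

import Mathlib

noncomputable section

/-- Smooth kernel data, 1-periodic in each variable. -/
def SPK (A : ℝ → ℝ → ℂ) : Prop :=
  ContDiff ℝ (⊤ : ℕ∞) (fun p : ℝ × ℝ => A p.1 p.2) ∧
    (∀ s t, A (s + 1) t = A s t) ∧ (∀ s t, A s (t + 1) = A s t)

/-- Logarithmic kernel `V(s,t) = (i/(2π)) A(s,t) log(sin²(π(s−t))) + K(s,t)`. -/
def logKer (A K : ℝ → ℝ → ℂ) (s t : ℝ) : ℂ :=
  Complex.I / (2 * Real.pi) * A s t * (Real.log (Real.sin (Real.pi * (s - t)) ^ 2) : ℂ) + K s t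

/-- Grid point `s_{j+ε} = (j − 1/2 + ε)h`. -/
def sg (h ε : ℝ) (j : ℤ) : ℝ := ((j : ℝ) - 1 / 2 + ε) * h

/-- Grid point `t_{j+ε} = (j + ε)h`. -/
def tg (h ε : ℝ) (j : ℤ) : ℝ := ((j : ℝ) + ε) * h

/-- Integral operator with kernel `V`. -/
def Vop (V : ℝ → ℝ → ℂ) (φ : ℝ → ℂ) (s : ℝ) : ℂ := ∫ t in (0:ℝ)..1, V s t * φ t

/-- Hypersingular operator `W = −D V₁ D + V₂`. -/
def Wop (V1 V2 : ℝ → ℝ → ℂ) (φ : ℝ → ℂ) (s : ℝ) : ℂ :=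
  -deriv (Vop V1 (deriv φ)) s + Vop V2 φ s

/-- Nyström matrix entries `W^ε_{ij}`. -/
def Wmat (V1 V2 : ℝ → ℝ → ℂ) (h ε : ℝ) (i j : ℤ) : ℂ :=
  V1 (sg h ε (i + 1)) (sg h 0 (j + 1)) - V1 (sg h ε i) (sg h 0 (j + 1))
    - V1 (sg h ε (i + 1)) (sg h 0 j) + V1 (sg h ε i) (sg h 0 j)
    + (h : ℂ) ^ 2 * V2 (tg h ε i) (tg h 0 j)

/-- Fourier coefficient of a 1-periodic function. -/
def fc (u : ℝ → ℂ) (m : ℤ) : ℂ :=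
  ∫ t in (0:ℝ)..1, u t * Complex.exp (-(2 * Real.pi * Complex.I * (m : ℂ) * (t : ℂ)))

/-- Periodic Sobolev norm of order `r`. -/
def sobNorm (r : ℝ) (u : ℝ → ℂ) : ℝ :=
  Real.sqrt (‖fc u 0‖ ^ 2 +
    ∑' m : ℤ, if m = 0 then 0 else |(m : ℝ)| ^ (2 * r) * ‖fc u m‖ ^ 2)

/-- 1-periodic step function on the ε-shifted grid with coefficients `v`. -/
def stepf (N : ℕ) (ε : ℝ) (v : ZMod N → ℂ) (s : ℝ) : ℂ :=
  v ((⌊s * N + 1 / 2 - ε⌋ : ℤ) : ZMod N)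

/-- Midpoint quadrature error matrix entries `E^ε_{ij}`. -/
def Emat (V2 : ℝ → ℝ → ℂ) (h ε : ℝ) (i j : ℤ) : ℂ :=
  (∫ s in (sg h ε i)..(sg h ε (i + 1)), ∫ t in (sg h 0 j)..(sg h 0 (j + 1)), V2 s t)
    - (h : ℂ) ^ 2 * V2 (tg h ε i) (tg h 0 j)

/-- Spectral (ℓ²-operator) norm of a complex `N×N` matrix. -/
def specNorm {N : ℕ} (M : Matrix (Fin N) (Fin N) ℂ) : ℝ :=
  ‖LinearMap.toContinuousLinearMap (Matrix.toEuclideanLin M)‖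

/-- The function `C̄₁(t) = −(1/(2πi)) log(4 sin²(πt))`. -/
def Cbar1 (t : ℝ) : ℂ :=
  -(1 / (2 * Real.pi * Complex.I)) * (Real.log (4 * Real.sin (Real.pi * t) ^ 2) : ℂ)

end

/-!
Let `F` be the distribution `φ_h' + φ̄ d_h` and `P_m = ∑ φ_j e^{2πijm/N}`.

*`F` is bounded by `(4π + 1) ‖φ_h‖₀`.* Summation by parts moves the difference from `φ` to the
test function `u`. By Cauchy–Schwarz on each cell the squared increments of `u` over the grid sum
to at most `h ‖u'‖₀²`, and `‖u'‖₀ ≤ 2π ‖u‖₁` by Parseval. The mean term is controlled by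
`|φ̄| ≤ ‖φ_h‖₀` and the Sobolev embedding `sup |u| ≤ (1 + 2π) ‖u‖₁`.

*`‖φ_h‖₀` is bounded by the dual norm.* Against `e_m(s) = e^{2πims}` with `0 < |m| ≤ N/2` the grid
mean vanishes and `|F(e_m)| = |1 - e^{2πim/N}| |P_m| ≥ (4|m|/N) |P_m|`, so that the factor `|m|`
cancels the `H¹` weight `w_m = |m|²`; also `|F(e_0)| = |P_0| / N`, with `w_0 = 1`. Testing `F` on
its Riesz representer among the trigonometric polynomials with one frequency `|m| ≤ N/2` per
residue class modulo `N` gives `‖F‖² ≥ ∑ |F(e_m)|² / w_m ≥ N⁻² ∑ |P_m|²`, and the last sum is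
`‖φ_h‖₀²` by Parseval on `ℤ/N`.
-/

noncomputable section

open MeasureTheory Complex Real
open scoped ComplexConjugate ZMod

section Increments

variable {E : Type*} [NormedAddCommGroup E] [NormedSpace ℝ E]

lemma periodic_deriv_of_periodic {u : ℝ → E} {c : ℝ} (hp : Function.Periodic u c) :
    Function.Periodic (deriv u) c := fun t ↦ by
  rw [← deriv_comp_add_const, funext hp]

lemma integral_norm_deriv_sq_period {u : ℝ → E} {T : ℝ} (hp : Function.Periodic u T) (s : ℝ) :
    ∫ t in s..(s + T), ‖deriv u t‖ ^ 2 = ∫ t in 0..T, ‖deriv u t‖ ^ 2 := by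
  have hp' : Function.Periodic (fun t ↦ ‖deriv u t‖ ^ 2) T :=
    (periodic_deriv_of_periodic hp).comp (‖·‖ ^ 2)
  simpa only [zero_add] using hp'.intervalIntegral_add_eq s 0

variable [CompleteSpace E]

lemma norm_intervalIntegral_sq_le {f : ℝ → E} (hf : Continuous f) {a b : ℝ} (hab : a ≤ b) :
    ‖∫ t in a..b, f t‖ ^ 2 ≤ (b - a) * ∫ t in a..b, ‖f t‖ ^ 2 := by
  rcases hab.eq_or_lt with rfl | hlt
  · simp
  have hba : 0 < b - a := sub_pos.2 hlt
  have hjensen : ‖⨍ t in a..b, f t‖ ^ 2 ≤ ⨍ t in a..b, ‖f t‖ ^ 2 :=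
    (convexOn_univ_norm.pow (fun _ _ ↦ norm_nonneg _) 2).map_set_average_le
      (by fun_prop) isClosed_univ (by simp [hba.ne']) (by simp) (by simp)
      hf.integrableOn_uIoc (hf.norm.pow 2).integrableOn_uIoc
  rw [interval_average_eq, interval_average_eq, norm_smul, mul_pow, smul_eq_mul, norm_inv,
    Real.norm_of_nonneg hba.le] at hjensen
  field_simp at hjensen
  linarith

lemma norm_sub_sq_le_integral_deriv {u : ℝ → E} (hu : ContDiff ℝ 1 u) {a b : ℝ} (hab : a ≤ b) :
    ‖u b - u a‖ ^ 2 ≤ (b - a) * ∫ t in a..b, ‖deriv u t‖ ^ 2 := by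
  have hc : Continuous (deriv u) := hu.continuous_deriv_one
  rw [← intervalIntegral.integral_deriv_eq_sub
    (fun x _ ↦ hu.differentiable one_ne_zero x) (hc.intervalIntegrable _ _)]
  exact norm_intervalIntegral_sq_le hc hab

lemma sum_norm_sub_sq_le_integral_deriv {u : ℝ → E} (hu : ContDiff ℝ 1 u) {t : ℕ → ℝ}
    (ht : Monotone t) {δ : ℝ} (hδ : ∀ n, t (n + 1) - t n ≤ δ) (n : ℕ) :
    ∑ i ∈ Finset.range n, ‖u (t (i + 1)) - u (t i)‖ ^ 2
      ≤ δ * ∫ x in (t 0)..(t n), ‖deriv u x‖ ^ 2 := by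
  have hint (i : ℕ) :
      IntervalIntegrable (fun x ↦ ‖deriv u x‖ ^ 2) volume (t i) (t (i + 1)) :=
    (hu.continuous_deriv_one.norm.pow 2).intervalIntegrable _ _
  rw [← intervalIntegral.sum_integral_adjacent_intervals (fun i _ ↦ hint i), Finset.mul_sum]
  refine Finset.sum_le_sum fun i _ ↦ (norm_sub_sq_le_integral_deriv hu (ht i.le_succ)).trans ?_
  gcongr
  · exact intervalIntegral.integral_nonneg (ht i.le_succ) fun _ _ ↦ by positivity
  · exact hδ i

lemma norm_sub_sq_le_integral_deriv_of_periodic {u : ℝ → E} (hu : ContDiff ℝ 1 u) {T : ℝ}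
    (hp : Function.Periodic u T) {s t : ℝ} (hst : s ≤ t) (hts : t ≤ s + T) :
    ‖u t - u s‖ ^ 2 ≤ T * ∫ x in 0..T, ‖deriv u x‖ ^ 2 := by
  have hmono : ∫ x in s..t, ‖deriv u x‖ ^ 2 ≤ ∫ x in s..(s + T), ‖deriv u x‖ ^ 2 :=
    intervalIntegral.integral_mono_interval le_rfl hst hts
      (Filter.Eventually.of_forall fun _ ↦ by positivity)
      ((hu.continuous_deriv_one.norm.pow 2).intervalIntegrable _ _)
  calc ‖u t - u s‖ ^ 2 ≤ (t - s) * ∫ x in s..t, ‖deriv u x‖ ^ 2 :=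
        norm_sub_sq_le_integral_deriv hu hst
    _ ≤ T * ∫ x in s..(s + T), ‖deriv u x‖ ^ 2 :=
        mul_le_mul (by linarith) hmono
          (intervalIntegral.integral_nonneg hst fun _ _ ↦ by positivity) (by linarith)
    _ = _ := by rw [integral_norm_deriv_sq_period hp s]

end Increments

section FourierCoefficients

variable {u : ℝ → ℂ}

lemma fc_eq_fourierCoeffOn (u : ℝ → ℂ) (m : ℤ) :
    fc u m = fourierCoeffOn zero_lt_one u m := by
  simp only [fc, fourierCoeffOn_eq_integral, fourier_coe_apply, smul_eq_mul, sub_zero, div_one,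
    one_smul]
  refine intervalIntegral.integral_congr fun t _ ↦ ?_
  simp only [mul_comm (u t)]
  congr 2
  push_cast
  ring

lemma fc_coe (f : UnitAddCircle → ℂ) (m : ℤ) :
    fc (fun s ↦ f (s : UnitAddCircle)) m = fourierCoeff f m := by
  rw [fc_eq_fourierCoeffOn, fourierCoeffOn_eq_integral, fourierCoeff_eq_intervalIntegral f m 0]
  simp

lemma fc_zero (u : ℝ → ℂ) : fc u 0 = ∫ t in (0:ℝ)..1, u t := by
  simp [fc]

lemma fc_const_smul (c : ℂ) (u : ℝ → ℂ) (m : ℤ) : fc (c • u) m = c * fc u m := by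
  simp only [fc, Pi.smul_apply, smul_eq_mul, mul_assoc, intervalIntegral.integral_const_mul]

lemma fc_deriv (hu : ContDiff ℝ 1 u) (hp : Function.Periodic u 1) (m : ℤ) :
    fc (deriv u) m = 2 * π * I * m * fc u m := by
  have hderiv (x : ℝ) : HasDerivAt u (deriv u x) x := (hu.differentiable one_ne_zero x).hasDerivAt
  have hint : IntervalIntegrable (deriv u) volume 0 1 :=
    hu.continuous_deriv_one.intervalIntegrable _ _
  have hend : u 1 = u 0 := by simpa using hp 0
  rcases eq_or_ne m 0 with rfl | hm
  · rw [fc_zero, intervalIntegral.integral_eq_sub_of_hasDerivAt (fun x _ ↦ hderiv x) hint, hend]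
    simp
  · rw [fc_eq_fourierCoeffOn u, fc_eq_fourierCoeffOn (deriv u),
      fourierCoeffOn_of_hasDerivAt zero_lt_one hm (fun x _ ↦ hderiv x) hint, hend]
    have hm' : (m : ℂ) ≠ 0 := Int.cast_ne_zero.2 hm
    field_simp
    simp

lemma hasSum_norm_fc_sq (hu : Continuous u) :
    HasSum (fun m ↦ ‖fc u m‖ ^ 2) (∫ t in (0:ℝ)..1, ‖u t‖ ^ 2) := by
  have hmem : MemLp u 2 (volume.restrict (Set.Ioc (0:ℝ) 1)) :=
    (memLp_two_iff_integrable_sq_norm hu.aestronglyMeasurable).2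
      (hu.norm.pow 2).integrableOn_Ioc
  simpa only [← fc_eq_fourierCoeffOn, sub_zero, inv_one, one_smul] using
    hasSum_sq_fourierCoeffOn zero_lt_one hmem

end FourierCoefficients

section SobolevNorm

variable {u : ℝ → ℂ}

/-- The weight of the frequency `m` in the squared periodic Sobolev norm of order `r`. -/
def sobWeight (r : ℝ) (m : ℤ) : ℝ := if m = 0 then 1 else |(m : ℝ)| ^ (2 * r)

lemma sobWeight_pos (r : ℝ) (m : ℤ) : 0 < sobWeight r m := by
  unfold sobWeight
  split_ifs with hm
  · exact one_pos
  · exact rpow_pos_of_pos (abs_pos.2 (Int.cast_ne_zero.2 hm)) _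

lemma sobWeight_one_of_ne_zero {m : ℤ} (hm : m ≠ 0) : sobWeight 1 m = (m : ℝ) ^ 2 := by
  simp [sobWeight, hm]

lemma sobNorm_nonneg (r : ℝ) (u : ℝ → ℂ) : 0 ≤ sobNorm r u :=
  Real.sqrt_nonneg _

lemma sobNorm_sq (r : ℝ) (u : ℝ → ℂ) :
    sobNorm r u ^ 2
      = ‖fc u 0‖ ^ 2 + ∑' m : ℤ, if m = 0 then 0 else |(m : ℝ)| ^ (2 * r) * ‖fc u m‖ ^ 2 := by
  have htsum : 0 ≤ ∑' m : ℤ, if m = 0 then 0 else |(m : ℝ)| ^ (2 * r) * ‖fc u m‖ ^ 2 :=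
    tsum_nonneg fun m ↦ by split_ifs <;> positivity
  exact Real.sq_sqrt (add_nonneg (sq_nonneg _) htsum)

lemma sobNorm_const_smul (r : ℝ) (c : ℂ) (u : ℝ → ℂ) :
    sobNorm r (c • u) = ‖c‖ * sobNorm r u := by
  refine (pow_left_inj₀ (sobNorm_nonneg _ _)
    (mul_nonneg (norm_nonneg c) (sobNorm_nonneg r u)) two_ne_zero).1 ?_
  simp only [mul_pow, sobNorm_sq, fc_const_smul, norm_mul, mul_add, ← tsum_mul_left, mul_ite,
    mul_zero, mul_left_comm]

lemma sobNorm_sq_eq_sum (r : ℝ) {S : Finset ℤ} (hS : ∀ m ∉ S, fc u m = 0) :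
    sobNorm r u ^ 2 = ∑ m ∈ S, sobWeight r m * ‖fc u m‖ ^ 2 := by
  have hzero : ‖fc u 0‖ ^ 2 = ∑ m ∈ S, if m = 0 then ‖fc u m‖ ^ 2 else 0 := by
    rw [Finset.sum_ite_eq']
    split_ifs with h
    · rfl
    · simp [hS 0 h]
  rw [sobNorm_sq, tsum_eq_sum (s := S) (fun m hm ↦ by simp [hS m hm]), hzero,
    ← Finset.sum_add_distrib]
  refine Finset.sum_congr rfl fun m _ ↦ ?_
  unfold sobWeight
  split_ifs <;> simp

lemma sobNorm_one_sq (hu : ContDiff ℝ 1 u) (hp : Function.Periodic u 1) :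
    sobNorm 1 u ^ 2 = ‖fc u 0‖ ^ 2 + (∫ t in (0:ℝ)..1, ‖deriv u t‖ ^ 2) / (2 * π) ^ 2 := by
  rw [sobNorm_sq, ← (hasSum_norm_fc_sq hu.continuous_deriv_one).tsum_eq, ← tsum_div_const]
  congr 2 with m
  rw [fc_deriv hu hp]
  split_ifs with hm
  · simp [hm]
  · simp only [norm_mul, norm_I, norm_real, norm_intCast, Complex.norm_ofNat, mul_one, mul_pow,
      Real.norm_of_nonneg pi_pos.le, sq_abs, rpow_ofNat]
    field_simp

lemma norm_fc_zero_le_sobNorm (hu : ContDiff ℝ 1 u) (hp : Function.Periodic u 1) :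
    ‖fc u 0‖ ≤ sobNorm 1 u := by
  have hint : 0 ≤ ∫ t in (0:ℝ)..1, ‖deriv u t‖ ^ 2 :=
    intervalIntegral.integral_nonneg zero_le_one fun _ _ ↦ by positivity
  refine (sq_le_sq₀ (norm_nonneg _) (sobNorm_nonneg 1 u)).1 ?_
  rw [sobNorm_one_sq hu hp]
  exact le_add_of_nonneg_right (by positivity)

lemma integral_norm_deriv_sq_le (hu : ContDiff ℝ 1 u) (hp : Function.Periodic u 1) :
    ∫ t in (0:ℝ)..1, ‖deriv u t‖ ^ 2 ≤ (2 * π * sobNorm 1 u) ^ 2 := by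
  rw [mul_pow, sobNorm_one_sq hu hp, mul_add, mul_div_cancel₀ _ (by positivity)]
  exact le_add_of_nonneg_left (by positivity)

lemma norm_le_sobNorm (hu : ContDiff ℝ 1 u) (hp : Function.Periodic u 1) (s : ℝ) :
    ‖u s‖ ≤ (1 + 2 * π) * sobNorm 1 u := by
  have hosc (t : ℝ) (ht : t ∈ Set.uIoc s (s + 1)) : ‖u t - u s‖ ≤ 2 * π * sobNorm 1 u := by
    rw [Set.uIoc_of_le (by linarith)] at ht
    refine (sq_le_sq₀ (norm_nonneg _)
      (mul_nonneg two_pi_pos.le (sobNorm_nonneg 1 u))).1 ?_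
    have hle := norm_sub_sq_le_integral_deriv_of_periodic hu hp ht.1.le ht.2
    exact (hle.trans_eq (one_mul _)).trans (integral_norm_deriv_sq_le hu hp)
  have hmean : ∫ t in s..(s + 1), u t = fc u 0 := by
    simpa only [fc_zero, zero_add] using hp.intervalIntegral_add_eq s 0
  have hsub : ‖fc u 0 - u s‖ ≤ 2 * π * sobNorm 1 u := by
    have hle := intervalIntegral.norm_integral_le_of_norm_le_const hosc
    rw [intervalIntegral.integral_sub (hu.continuous.intervalIntegrable _ _) (by simp), hmean]
      at hle
    simpa using hle
  calc ‖u s‖ ≤ ‖fc u 0‖ + ‖fc u 0 - u s‖ := norm_le_norm_add_norm_sub _ _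
    _ ≤ sobNorm 1 u + 2 * π * sobNorm 1 u := add_le_add (norm_fc_zero_le_sobNorm hu hp) hsub
    _ = _ := by ring

end SobolevNorm

section TrigonometricPolynomials

/-- The function `s ↦ e^{2πims}` on the real line. -/
def fourierMode (m : ℤ) (s : ℝ) : ℂ := fourier m (s : UnitAddCircle)

/-- The trigonometric polynomial `∑_{m ∈ S} a_m e^{2πims}`. -/
def trigPoly (S : Finset ℤ) (a : ℤ → ℂ) : ℝ → ℂ := ∑ m ∈ S, a m • fourierMode m

lemma norm_fourierMode (m : ℤ) (s : ℝ) : ‖fourierMode m s‖ = 1 :=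
  Circle.norm_coe _

lemma fourierMode_contDiff (m : ℤ) : ContDiff ℝ (⊤ : ℕ∞) (fourierMode m) := by
  unfold fourierMode
  simp only [fourier_coe_apply]
  have hcast : ContDiff ℝ (⊤ : ℕ∞) (fun s : ℝ ↦ (s : ℂ)) := ofRealCLM.contDiff
  fun_prop

lemma fourierMode_periodic (m : ℤ) : Function.Periodic (fourierMode m) 1 := fun s ↦ by
  rw [fourierMode, AddCircle.coe_add_period, fourierMode]

variable (S : Finset ℤ) (a : ℤ → ℂ)

lemma trigPoly_contDiff : ContDiff ℝ (⊤ : ℕ∞) (trigPoly S a) := by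
  rw [trigPoly, Finset.sum_fn]
  exact ContDiff.sum fun m _ ↦ (fourierMode_contDiff m).const_smul (a m)

lemma trigPoly_periodic : Function.Periodic (trigPoly S a) 1 := fun s ↦ by
  simp only [trigPoly, Finset.sum_apply, Pi.smul_apply, fourierMode_periodic _ s]

lemma fc_trigPoly (n : ℤ) : fc (trigPoly S a) n = if n ∈ S then a n else 0 := by
  have hcoe : trigPoly S a
      = fun s : ℝ ↦ (∑ m ∈ S, a m • ⇑(fourier m : C(UnitAddCircle, ℂ))) (s : UnitAddCircle) := by
    ext s
    simp [trigPoly, fourierMode]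
  have hcont (f : C(UnitAddCircle, ℂ)) : Integrable f AddCircle.haarAddCircle :=
    f.continuous.integrable_of_hasCompactSupport (HasCompactSupport.of_compactSpace f)
  rw [hcoe, fc_coe, fourierCoeff.sum S _ fun m _ ↦ (hcont (fourier m)).smul (a m),
    Finset.sum_apply]
  simp [fourierCoeff.const_smul, fourierCoeff_fourier, Pi.single_apply, -fourier_apply]

lemma sobNorm_trigPoly_sq (r : ℝ) :
    sobNorm r (trigPoly S a) ^ 2 = ∑ m ∈ S, sobWeight r m * ‖a m‖ ^ 2 := by
  rw [sobNorm_sq_eq_sum r (S := S) fun m hm ↦ by rw [fc_trigPoly, if_neg hm]]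
  refine Finset.sum_congr rfl fun m hm ↦ ?_
  rw [fc_trigPoly, if_pos hm]

lemma map_trigPoly (ℓ : (ℝ → ℂ) →ₗ[ℂ] ℂ) :
    ℓ (trigPoly S a) = ∑ m ∈ S, a m * ℓ (fourierMode m) := by
  simp only [trigPoly, map_sum, map_smul, smul_eq_mul]

end TrigonometricPolynomials

section DualNorm

variable {r C : ℝ} {ℓ : (ℝ → ℂ) →ₗ[ℂ] ℂ}

/-- The dual Sobolev norm of order `-r` of a linear functional, tested on the smooth 1-periodic
functions; it has the junk value `0` when the functional is unbounded in `sobNorm r`. -/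
def dualSobNorm (r : ℝ) (ℓ : (ℝ → ℂ) →ₗ[ℂ] ℂ) : ℝ :=
  sSup {x : ℝ | ∃ u : ℝ → ℂ, ContDiff ℝ (⊤ : ℕ∞) u ∧ Function.Periodic u 1 ∧
    sobNorm r u ≤ 1 ∧ x = ‖ℓ u‖}

lemma dualSobNorm_nonneg (r : ℝ) (ℓ : (ℝ → ℂ) →ₗ[ℂ] ℂ) : 0 ≤ dualSobNorm r ℓ :=
  Real.sSup_nonneg (by rintro _ ⟨u, -, -, -, rfl⟩; exact norm_nonneg _)

lemma dualSobNorm_le (hC : 0 ≤ C)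
    (hℓ : ∀ u, ContDiff ℝ (⊤ : ℕ∞) u → Function.Periodic u 1 → ‖ℓ u‖ ≤ C * sobNorm r u) :
    dualSobNorm r ℓ ≤ C := by
  refine Real.sSup_le ?_ hC
  rintro _ ⟨u, hu, hp, hnorm, rfl⟩
  exact (hℓ u hu hp).trans (mul_le_of_le_one_right hC hnorm)

lemma norm_le_dualSobNorm_mul (hC : 0 ≤ C)
    (hℓ : ∀ u, ContDiff ℝ (⊤ : ℕ∞) u → Function.Periodic u 1 → ‖ℓ u‖ ≤ C * sobNorm r u)
    {u : ℝ → ℂ} (hu : ContDiff ℝ (⊤ : ℕ∞) u) (hp : Function.Periodic u 1) :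
    ‖ℓ u‖ ≤ dualSobNorm r ℓ * sobNorm r u := by
  rcases (sobNorm_nonneg r u).eq_or_lt with hzero | hpos
  · simpa only [← hzero, mul_zero] using hℓ u hu hp
  have hbdd : BddAbove {x : ℝ | ∃ u : ℝ → ℂ, ContDiff ℝ (⊤ : ℕ∞) u ∧ Function.Periodic u 1 ∧
      sobNorm r u ≤ 1 ∧ x = ‖ℓ u‖} := by
    refine ⟨C, ?_⟩
    rintro _ ⟨v, hv, hvp, hnorm, rfl⟩
    exact (hℓ v hv hvp).trans (mul_le_of_le_one_right hC hnorm)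
  let c : ℂ := ↑(sobNorm r u)⁻¹
  have hc : ‖c‖ = (sobNorm r u)⁻¹ := Complex.norm_of_nonneg (inv_nonneg.2 hpos.le)
  have hle : ‖ℓ (c • u)‖ ≤ dualSobNorm r ℓ :=
    le_csSup hbdd ⟨c • u, hu.const_smul c, fun s ↦ by simp only [Pi.smul_apply, hp s],
      by rw [sobNorm_const_smul, hc, inv_mul_cancel₀ hpos.ne'], rfl⟩
  rwa [map_smul, norm_smul, hc, inv_mul_le_iff₀ hpos, mul_comm] at hle

lemma sum_norm_sq_div_sobWeight_le (hC : 0 ≤ C)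
    (hℓ : ∀ u, ContDiff ℝ (⊤ : ℕ∞) u → Function.Periodic u 1 → ‖ℓ u‖ ≤ C * sobNorm r u)
    (S : Finset ℤ) :
    ∑ m ∈ S, ‖ℓ (fourierMode m)‖ ^ 2 / sobWeight r m ≤ dualSobNorm r ℓ ^ 2 := by
  set T : ℝ := ∑ m ∈ S, ‖ℓ (fourierMode m)‖ ^ 2 / sobWeight r m with hT
  -- The coefficients of the Riesz representer of `ℓ` among the polynomials with frequencies in `S`.
  set a : ℤ → ℂ := fun m ↦ conj (ℓ (fourierMode m)) / sobWeight r m with ha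
  have hT_nonneg : 0 ≤ T :=
    Finset.sum_nonneg fun m _ ↦ div_nonneg (sq_nonneg _) (sobWeight_pos r m).le
  have hval : ℓ (trigPoly S a) = (T : ℂ) := by
    simp only [map_trigPoly, ha, hT, ofReal_sum, ofReal_div, ofReal_pow, ← Complex.conj_mul',
      div_mul_eq_mul_div]
  have hnorm : sobNorm r (trigPoly S a) ^ 2 = T := by
    rw [sobNorm_trigPoly_sq]
    refine Finset.sum_congr rfl fun m _ ↦ ?_
    have hw := sobWeight_pos r m
    rw [norm_div, RCLike.norm_conj, Complex.norm_of_nonneg hw.le]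
    field_simp
  have hle : T ≤ dualSobNorm r ℓ * sobNorm r (trigPoly S a) := by
    simpa only [hval, Complex.norm_of_nonneg hT_nonneg] using
      norm_le_dualSobNorm_mul hC hℓ (trigPoly_contDiff S a) (trigPoly_periodic S a)
  rcases (sobNorm_nonneg r (trigPoly S a)).eq_or_lt with hzero | hpos
  · rw [← hnorm, ← hzero, zero_pow two_ne_zero]
    exact sq_nonneg _
  · rw [← hnorm, sq, mul_le_mul_iff_left₀ hpos] at hle
    exact hnorm ▸ pow_le_pow_left₀ hpos.le hle 2

end DualNorm

section DiscreteFourier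

variable {N : ℕ} [NeZero N]

lemma sum_dft_mul (φ ψ : ZMod N → ℂ) : ∑ k, 𝓕 φ k * ψ k = ∑ j, φ j * 𝓕 ψ j := by
  simp only [ZMod.dft_apply, smul_eq_mul, Finset.sum_mul, Finset.mul_sum]
  rw [Finset.sum_comm]
  exact Finset.sum_congr rfl fun j _ ↦ Finset.sum_congr rfl fun k _ ↦ by rw [mul_comm k j]; ring

lemma conj_dft (φ : ZMod N → ℂ) (k : ZMod N) :
    conj (𝓕 φ k) = 𝓕 (fun j ↦ conj (φ j)) (-k) := by
  simp only [ZMod.dft_apply, smul_eq_mul, map_sum, map_mul, ← AddChar.map_neg_eq_conj, mul_neg]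

lemma sum_norm_dft_sq (φ : ZMod N → ℂ) : ∑ k, ‖𝓕 φ k‖ ^ 2 = N * ∑ j, ‖φ j‖ ^ 2 := by
  have hconj : (fun k ↦ conj (𝓕 φ k))
      = 𝓕 fun j ↦ conj (φ (-j)) := by
    ext k
    rw [conj_dft, ZMod.dft_comp_neg (fun j ↦ conj (φ j))]
  have hcomplex : ∑ k, 𝓕 φ k * conj (𝓕 φ k)
      = N * ∑ j, φ j * conj (φ j) := by
    rw [sum_dft_mul φ fun k ↦ conj (𝓕 φ k), hconj, ZMod.dft_dft, Finset.mul_sum]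
    simp only [neg_neg, smul_eq_mul, mul_left_comm]
  simp only [Complex.mul_conj'] at hcomplex
  exact_mod_cast hcomplex

lemma le_norm_one_sub_stdAddChar {m : ℤ} (hm : 2 * |m| ≤ N) :
    4 * |(m : ℝ)| / N ≤ ‖1 - ZMod.stdAddChar (m : ZMod N)‖ := by
  have hN : (0 : ℝ) < N := Nat.cast_pos.2 (NeZero.pos N)
  have hexp : ZMod.stdAddChar (m : ZMod N) = exp (I * ((2 * (π * m / N) : ℝ) : ℂ)) := by
    rw [ZMod.stdAddChar_coe]
    congr 1
    push_cast
    ring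
  have habs : |π * m / N| = π * |(m : ℝ)| / N := by
    rw [abs_div, abs_mul, abs_of_pos pi_pos, abs_of_pos hN]
  have hsmall : |π * m / N| ≤ π / 2 := by
    rw [habs, div_le_div_iff₀ hN two_pos, mul_assoc, mul_comm _ (2 : ℝ)]
    gcongr
    exact_mod_cast hm
  have hsin := Real.mul_abs_le_abs_sin hsmall
  rw [norm_sub_rev, hexp, Complex.norm_exp_I_mul_ofReal_sub_one,
    mul_div_cancel_left₀ _ two_ne_zero, norm_mul, Real.norm_ofNat, Real.norm_eq_abs]
  calc 4 * |(m : ℝ)| / N = 2 * (2 / π * |π * m / N|) := by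
        rw [habs]
        field_simp
        ring
    _ ≤ 2 * |Real.sin (π * m / N)| := by gcongr

end DiscreteFourier

section StepNorm

variable {N : ℕ} [NeZero N]

/-- The `L²` norm of the step function with the values `φ` on `N` cells of length `1 / N`. -/
def stepNorm (φ : ZMod N → ℂ) : ℝ :=
  √((1 / (N : ℝ)) * ∑ j, ‖φ j‖ ^ 2)

lemma stepNorm_nonneg (φ : ZMod N → ℂ) : 0 ≤ stepNorm φ :=
  Real.sqrt_nonneg _

lemma stepNorm_sq (φ : ZMod N → ℂ) : stepNorm φ ^ 2 = (1 / (N : ℝ)) * ∑ j, ‖φ j‖ ^ 2 :=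
  Real.sq_sqrt (by positivity)

lemma stepNorm_sq_eq_sum_dft (φ : ZMod N → ℂ) :
    stepNorm φ ^ 2 = ∑ k, (‖𝓕 φ k‖ / N) ^ 2 := by
  have hN : (N : ℝ) ≠ 0 := Nat.cast_ne_zero.2 (NeZero.ne N)
  simp only [div_pow, ← Finset.sum_div, sum_norm_dft_sq, stepNorm_sq]
  field_simp

lemma norm_sum_mul_le_stepNorm (φ w : ZMod N → ℂ) :
    ‖∑ j, φ j * w j‖ ≤ stepNorm φ * √(N * ∑ j, ‖w j‖ ^ 2) := by
  have hN : (N : ℝ) ≠ 0 := Nat.cast_ne_zero.2 (NeZero.ne N)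
  calc ‖∑ j, φ j * w j‖ ≤ ∑ j, ‖φ j‖ * ‖w j‖ :=
        norm_sum_le_of_le _ fun j _ ↦ norm_mul_le _ _
    _ ≤ √(∑ j, ‖φ j‖ ^ 2) * √(∑ j, ‖w j‖ ^ 2) := Real.sum_mul_le_sqrt_mul_sqrt _ _ _
    _ = _ := by
        rw [stepNorm, ← Real.sqrt_mul (by positivity), ← Real.sqrt_mul (by positivity)]
        congr 1
        field_simp

lemma norm_mean_le_stepNorm (φ : ZMod N → ℂ) : ‖(1 / (N : ℂ)) * ∑ j, φ j‖ ≤ stepNorm φ := by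
  have hN : (N : ℝ) ≠ 0 := Nat.cast_ne_zero.2 (NeZero.ne N)
  have hone : √(N * ∑ _j : ZMod N, ‖1 / (N : ℂ)‖ ^ 2) = 1 := by
    rw [Finset.sum_const, Finset.card_univ, ZMod.card, nsmul_eq_mul, norm_div, norm_one,
      Complex.norm_natCast, Real.sqrt_eq_one]
    field_simp
  have hle := norm_sum_mul_le_stepNorm φ fun _ ↦ 1 / (N : ℂ)
  rwa [hone, mul_one, ← Finset.sum_mul, mul_comm] at hle

end StepNorm

lemma sum_sub_mul_eq_neg_sum_mul_sub {G R : Type*} [AddCommGroup G] [Fintype G] [Ring R]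
    (φ v : G → R) (c : G) :
    ∑ j, (φ j - φ (j - c)) * v j = -∑ j, φ j * (v (j + c) - v j) := by
  have hshift : ∑ j, φ (j - c) * v j = ∑ j, φ j * v (j + c) := by
    simpa using (Equiv.sum_comp (Equiv.addRight c) fun j ↦ φ (j - c) * v j).symm
  simp only [sub_mul, mul_sub, Finset.sum_sub_distrib, hshift, neg_sub]

lemma sum_zmod_eq_sum_range {M : Type*} [AddCommMonoid M] {N : ℕ} [NeZero N] (f : ZMod N → M) :
    ∑ j, f j = ∑ i ∈ Finset.range N, f i :=
  Finset.sum_nbij ZMod.val (fun j _ ↦ Finset.mem_range.2 j.val_lt)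
    ((ZMod.val_injective N).injOn)
    (fun i hi ↦ ⟨i, Finset.mem_coe.2 (Finset.mem_univ _),
      ZMod.val_natCast_of_lt (Finset.mem_range.1 hi)⟩)
    fun j _ ↦ by rw [ZMod.natCast_zmod_val]

section GridSample

variable {N : ℕ} [NeZero N] {u : ℝ → ℂ}

/-- The value `u(s_j)` at the grid point `s_j = (j - 1/2) / N`, with the index `j` represented in
`{0, …, N - 1}`. -/
def gridSample (u : ℝ → ℂ) (j : ZMod N) : ℂ := u (sg (1 / (N : ℝ)) 0 ((j.val : ℕ) : ℤ))

lemma gridSample_intCast (hp : Function.Periodic u 1) (n : ℤ) :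
    gridSample u (n : ZMod N) = u (sg (1 / (N : ℝ)) 0 n) := by
  have hN : (N : ℝ) ≠ 0 := Nat.cast_ne_zero.2 (NeZero.ne N)
  have hshift : sg (1 / (N : ℝ)) 0 n = sg (1 / (N : ℝ)) 0 (n % N) + (n / N : ℤ) * 1 := by
    conv_lhs => rw [← Int.emod_add_mul_ediv n N]
    unfold sg
    push_cast
    field_simp
    ring
  rw [gridSample, ZMod.val_intCast, hshift]
  exact ((hp.int_mul _) _).symm

lemma sum_norm_gridSample_sub_sq_le (hu : ContDiff ℝ 1 u) (hp : Function.Periodic u 1) :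
    N * ∑ j : ZMod N, ‖gridSample u (j + 1) - gridSample u j‖ ^ 2
      ≤ ∫ t in (0:ℝ)..1, ‖deriv u t‖ ^ 2 := by
  have hN : (0 : ℝ) < N := Nat.cast_pos.2 (NeZero.pos N)
  let t : ℕ → ℝ := fun n ↦ sg (1 / (N : ℝ)) 0 n
  have hsample (n : ℕ) : gridSample u (n : ZMod N) = u (t n) := by
    exact_mod_cast gridSample_intCast (N := N) hp n
  have hstep (n : ℕ) : t (n + 1) - t n = 1 / N := by
    simp only [t, sg]
    push_cast
    ring
  have hmono : Monotone t := monotone_nat_of_le_succ fun n ↦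
    sub_nonneg.1 ((hstep n).symm ▸ by positivity)
  have hend : t N = t 0 + 1 := by
    simp only [t, sg]
    push_cast
    field_simp
    ring
  have hsum := sum_norm_sub_sq_le_integral_deriv hu hmono (fun n ↦ (hstep n).le) N
  rw [hend, integral_norm_deriv_sq_period hp, one_div, ← div_eq_inv_mul, le_div_iff₀' hN] at hsum
  simpa only [sum_zmod_eq_sum_range, ← Nat.cast_succ, hsample] using hsum

lemma norm_mean_gridSample_le (hu : ContDiff ℝ 1 u) (hp : Function.Periodic u 1) :
    ‖(1 / (N : ℂ)) * ∑ j : ZMod N, gridSample u j‖ ≤ (1 + 2 * π) * sobNorm 1 u := by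
  have hN : (N : ℝ) ≠ 0 := Nat.cast_ne_zero.2 (NeZero.ne N)
  calc ‖(1 / (N : ℂ)) * ∑ j : ZMod N, gridSample u j‖
      ≤ 1 / N * ∑ _j : ZMod N, (1 + 2 * π) * sobNorm 1 u := by
        rw [norm_mul, norm_div, norm_one, Complex.norm_natCast]
        gcongr
        exact norm_sum_le_of_le _ fun j _ ↦ norm_le_sobNorm hu hp _
    _ = _ := by
        rw [Finset.sum_const, Finset.card_univ, ZMod.card, nsmul_eq_mul]
        field_simp

lemma gridSample_fourierMode (m : ℤ) (j : ZMod N) :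
    gridSample (fourierMode m) j
      = fourierMode m (-(1 / (2 * N))) * ZMod.stdAddChar ((m : ZMod N) * j) := by
  have hN : (N : ℂ) ≠ 0 := Nat.cast_ne_zero.2 (NeZero.ne N)
  have hcast : (m : ZMod N) * j = ((m * (j.val : ℤ) : ℤ) : ZMod N) := by simp
  rw [hcast, ZMod.stdAddChar_coe]
  simp only [gridSample, fourierMode, fourier_coe_apply, ← Complex.exp_add, sg]
  congr 1
  push_cast
  field_simp
  ring

lemma sum_gridSample_fourierMode {m : ℤ} (hm : (m : ZMod N) ≠ 0) :
    ∑ j : ZMod N, gridSample (fourierMode m) j = 0 := by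
  have hsum := AddChar.sum_mulShift (m : ZMod N) (ZMod.isPrimitive_stdAddChar N)
  rw [if_neg hm] at hsum
  simp only [gridSample_fourierMode, ← Finset.mul_sum, mul_comm (m : ZMod N), hsum, mul_zero,
    Nat.cast_zero]

end GridSample

section GridPairing

variable {N : ℕ} [NeZero N] {u : ℝ → ℂ}

/-- The distribution `φ_h' + φ̄ d_h` acting on test functions, where `φ_h` is the step function
with the values `φ`, `φ̄` its mean value and `d_h` the mean of the Dirac masses at the grid
points. -/
def gridPairing (φ : ZMod N → ℂ) : (ℝ → ℂ) →ₗ[ℂ] ℂ where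
  toFun u := (∑ j, (φ j - φ (j - 1)) * gridSample u j)
    + ((1 / (N : ℂ)) * ∑ j, φ j) * ((1 / (N : ℂ)) * ∑ j : ZMod N, gridSample u j)
  map_add' u v := by
    simp only [gridSample, Pi.add_apply, mul_add, Finset.sum_add_distrib]
    ring
  map_smul' c u := by
    simp only [gridSample, Pi.smul_apply, smul_eq_mul, RingHom.id_apply, mul_add, Finset.mul_sum,
      mul_left_comm c]

lemma gridPairing_apply (φ : ZMod N → ℂ) (u : ℝ → ℂ) :
    gridPairing φ u = (∑ j, (φ j - φ (j - 1)) * gridSample u j)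
      + ((1 / (N : ℂ)) * ∑ j, φ j) * ((1 / (N : ℂ)) * ∑ j : ZMod N, gridSample u j) :=
  rfl

lemma norm_sum_sub_mul_gridSample_le (φ : ZMod N → ℂ) (hu : ContDiff ℝ 1 u)
    (hp : Function.Periodic u 1) :
    ‖∑ j, (φ j - φ (j - 1)) * gridSample u j‖ ≤ stepNorm φ * (2 * π * sobNorm 1 u) := by
  rw [sum_sub_mul_eq_neg_sum_mul_sub, norm_neg]
  refine (norm_sum_mul_le_stepNorm φ _).trans
    (mul_le_mul_of_nonneg_left ?_ (stepNorm_nonneg φ))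
  exact Real.sqrt_le_iff.2 ⟨mul_nonneg two_pi_pos.le (sobNorm_nonneg 1 u),
    (sum_norm_gridSample_sub_sq_le hu hp).trans (integral_norm_deriv_sq_le hu hp)⟩

lemma norm_gridPairing_le (φ : ZMod N → ℂ) (hu : ContDiff ℝ 1 u) (hp : Function.Periodic u 1) :
    ‖gridPairing φ u‖ ≤ (4 * π + 1) * stepNorm φ * sobNorm 1 u := by
  calc ‖gridPairing φ u‖
      ≤ stepNorm φ * (2 * π * sobNorm 1 u) + stepNorm φ * ((1 + 2 * π) * sobNorm 1 u) := by
        rw [gridPairing_apply]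
        refine norm_add_le_of_le (norm_sum_sub_mul_gridSample_le φ hu hp) ?_
        rw [norm_mul]
        exact mul_le_mul (norm_mean_le_stepNorm φ) (norm_mean_gridSample_le hu hp)
          (norm_nonneg _) (stepNorm_nonneg φ)
    _ = _ := by ring

lemma sum_sub_mul_gridSample_fourierMode (φ : ZMod N → ℂ) (m : ℤ) :
    ∑ j, (φ j - φ (j - 1)) * gridSample (fourierMode m) j
      = fourierMode m (-(1 / (2 * N)))
        * ((1 - ZMod.stdAddChar (m : ZMod N)) * 𝓕 φ (-(m : ZMod N))) := by
  rw [sum_sub_mul_eq_neg_sum_mul_sub, ← Finset.sum_neg_distrib, ZMod.dft_apply, Finset.mul_sum,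
    Finset.mul_sum]
  refine Finset.sum_congr rfl fun j _ ↦ ?_
  rw [gridSample_fourierMode, gridSample_fourierMode, mul_add, mul_one, AddChar.map_add_eq_mul,
    mul_neg, neg_neg, mul_comm j, smul_eq_mul]
  ring

lemma norm_gridPairing_fourierMode (φ : ZMod N → ℂ) {m : ℤ} (hm : (m : ZMod N) ≠ 0) :
    ‖gridPairing φ (fourierMode m)‖
      = ‖1 - ZMod.stdAddChar (m : ZMod N)‖ * ‖𝓕 φ (-(m : ZMod N))‖ := by
  rw [gridPairing_apply, sum_gridSample_fourierMode hm, mul_zero, mul_zero, add_zero,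
    sum_sub_mul_gridSample_fourierMode, norm_mul, norm_fourierMode, one_mul, norm_mul]

lemma norm_gridPairing_fourierMode_zero (φ : ZMod N → ℂ) :
    ‖gridPairing φ (fourierMode 0)‖ = ‖𝓕 φ 0‖ / N := by
  have hN : (N : ℂ) ≠ 0 := Nat.cast_ne_zero.2 (NeZero.ne N)
  have hone (j : ZMod N) : gridSample (fourierMode 0) j = 1 := by
    simp [gridSample, fourierMode]
  rw [gridPairing_apply, sum_sub_mul_gridSample_fourierMode, ZMod.dft_apply_zero]
  simp [hone, hN, div_eq_inv_mul]

-- The lower bound `4|m| / N` on the symbol of the backward difference cancels the `H¹` weight.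
lemma norm_dft_neg_div_sq_le (φ : ZMod N → ℂ) {m : ℤ} (hm : 2 * |m| ≤ N) :
    (‖𝓕 φ (-(m : ZMod N))‖ / N) ^ 2
      ≤ ‖gridPairing φ (fourierMode m)‖ ^ 2 / sobWeight 1 m := by
  rcases eq_or_ne m 0 with rfl | hm0
  · simp [norm_gridPairing_fourierMode_zero, sobWeight]
  have hm' : (m : ZMod N) ≠ 0 := fun h ↦ by
    have habs := abs_pos.2 hm0
    exact hm0 (Int.eq_zero_of_abs_lt_dvd ((ZMod.intCast_zmod_eq_zero_iff_dvd m N).1 h) (by lia))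
  rw [sobWeight_one_of_ne_zero hm0, ← sq_abs (m : ℝ), ← div_pow]
  refine pow_le_pow_left₀ (by positivity) ?_ 2
  rw [le_div_iff₀ (abs_pos.2 (Int.cast_ne_zero.2 hm0)), norm_gridPairing_fourierMode φ hm']
  calc ‖𝓕 φ (-(m : ZMod N))‖ / N * |(m : ℝ)|
      = |(m : ℝ)| / N * ‖𝓕 φ (-(m : ZMod N))‖ := by ring
    _ ≤ 4 * |(m : ℝ)| / N * ‖𝓕 φ (-(m : ZMod N))‖ := by
        gcongr
        exact le_mul_of_one_le_left (abs_nonneg _) (by norm_num)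
    _ ≤ _ := by
        gcongr
        exact le_norm_one_sub_stdAddChar hm

lemma dualSobNorm_gridPairing_le (φ : ZMod N → ℂ) :
    dualSobNorm 1 (gridPairing φ) ≤ (4 * π + 1) * stepNorm φ :=
  dualSobNorm_le (mul_nonneg (by positivity) (stepNorm_nonneg φ)) fun _ hu hp ↦
    norm_gridPairing_le φ (hu.of_le (by simp)) hp

lemma stepNorm_le_dualSobNorm_gridPairing (φ : ZMod N → ℂ) :
    stepNorm φ ≤ dualSobNorm 1 (gridPairing φ) := by
  have hband (k : ZMod N) : 2 * |k.valMinAbs| ≤ N := by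
    have hle := ZMod.natAbs_valMinAbs_le k
    rw [Int.abs_eq_natAbs]
    lia
  refine (sq_le_sq₀ (stepNorm_nonneg φ) (dualSobNorm_nonneg 1 _)).1 ?_
  calc stepNorm φ ^ 2 = ∑ k : ZMod N, (‖𝓕 φ (-(k.valMinAbs : ZMod N))‖ / N) ^ 2 := by
        rw [stepNorm_sq_eq_sum_dft, ← Equiv.sum_comp (Equiv.neg (ZMod N))]
        simp only [Equiv.neg_apply, ZMod.coe_valMinAbs]
    _ ≤ ∑ k : ZMod N, ‖gridPairing φ (fourierMode k.valMinAbs)‖ ^ 2 / sobWeight 1 k.valMinAbs :=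
        Finset.sum_le_sum fun k _ ↦ norm_dft_neg_div_sq_le φ (hband k)
    _ = ∑ m ∈ Finset.univ.map ⟨ZMod.valMinAbs, ZMod.injective_valMinAbs⟩,
          ‖gridPairing φ (fourierMode m)‖ ^ 2 / sobWeight 1 m := by
        rw [Finset.sum_map]
        rfl
    _ ≤ dualSobNorm 1 (gridPairing φ) ^ 2 :=
        sum_norm_sq_div_sobWeight_le (mul_nonneg (by positivity) (stepNorm_nonneg φ))
          (fun _ hu hp ↦ norm_gridPairing_le φ (hu.of_le (by simp)) hp) _

end GridPairing

end

/-- equivalence of `‖φ_h‖₀` with the `H^{−1}` norm of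
`φ_h′ + φ̂_h(0) d_h`, expressed as a supremum over smooth 1-periodic test functions
with `‖u‖₁ ≤ 1`, with absolute constants `c₁, c₂`. -/
theorem stmt_8 :
    ∃ c1 > (0:ℝ), ∃ c2 > (0:ℝ), ∀ (N : ℕ) [NeZero N], ∀ φv : ZMod N → ℂ,
      c1 * sSup {r : ℝ | ∃ u : ℝ → ℂ, ContDiff ℝ (⊤ : ℕ∞) u ∧ Function.Periodic u 1 ∧
            sobNorm 1 u ≤ 1 ∧
            r = ‖(∑ j : ZMod N, (φv j - φv (j - 1)) * u (sg (1 / (N : ℝ)) 0 ((j.val : ℕ) : ℤ)))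
                  + ((1 / (N : ℂ)) * ∑ j : ZMod N, φv j) * ((1 / (N : ℂ))
                      * ∑ j : ZMod N, u (sg (1 / (N : ℝ)) 0 ((j.val : ℕ) : ℤ)))‖} ≤
        Real.sqrt ((1 / (N : ℝ)) * ∑ j : ZMod N, ‖φv j‖ ^ 2) ∧
      Real.sqrt ((1 / (N : ℝ)) * ∑ j : ZMod N, ‖φv j‖ ^ 2) ≤
        c2 * sSup {r : ℝ | ∃ u : ℝ → ℂ, ContDiff ℝ (⊤ : ℕ∞) u ∧ Function.Periodic u 1 ∧
            sobNorm 1 u ≤ 1 ∧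
            r = ‖(∑ j : ZMod N, (φv j - φv (j - 1)) * u (sg (1 / (N : ℝ)) 0 ((j.val : ℕ) : ℤ)))
                  + ((1 / (N : ℂ)) * ∑ j : ZMod N, φv j) * ((1 / (N : ℂ))
                      * ∑ j : ZMod N, u (sg (1 / (N : ℝ)) 0 ((j.val : ℕ) : ℤ)))‖} := by
  refine ⟨(4 * Real.pi + 1)⁻¹, by positivity, 1, one_pos, fun N _ φ ↦ ⟨?_, ?_⟩⟩
  · exact (inv_mul_le_iff₀ (by positivity)).2 (dualSobNorm_gridPairing_le φ)
  · rw [one_mul]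
    exact stepNorm_le_dualSobNorm_gridPairing φ
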